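/- Let A be a commutative semiring and ⋀ the exterior semialgebra over A. For every r ≥ 1 and every partition λ = (λ_1 ≥ ⋯ ≥ λ_r) with at most r parts: (σ_+(z)x^0) ∧ [x]^r_λ ⪯ z^r · σ_+(z)(σ̄_-(z)(x^{r+λ_1} ∧ x^{r−1+λ_2} ∧ ⋯ ∧ x^{1+λ_r} ∧ x^0)), where the inequality is coefficientwise in the powers of z (each coefficient of the right-hand side equals the corresponding coefficient of the left-hand side plus a quasi-zero). -/

import Mathlib

/-!  The exterior semialgebra over a commutative semiring `A`, following
Chapman–Gatto–Rowen.  It is the free `A`-module on the basis consisting of a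
unit symbol `1` (here `none`) together with all pairs `(ε, s)` where
`ε ∈ {+1, −1}` (here a `Bool`, `true = +1`) and `s` is a strictly decreasing
nonempty tuple of natural numbers (here a nonempty `Finset ℕ`, read in
decreasing order).  -/

namespace ExtSemi

/-- The basis: `none` is the unit `1`; `some (ε, s)` is the sign `ε` times the
strictly decreasing wedge monomial on the nonempty finite set `s`. -/
abbrev XB : Type := Option (Bool × {s : Finset ℕ // s.Nonempty})

variable (A : Type*) [CommSemiring A]

/-- The exterior semialgebra `⋀`: the free `A`-module on `XB`. -/
abbrev Ext : Type _ := XB →₀ A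

/-- Sign flip on the basis; the unit is fixed. -/
def negB : XB → XB
  | none => none
  | some (ε, s) => some (!ε, s)

/-- The negation map `(−)` on `⋀`: the `A`-linear map sending `(ε, s)` to
`(−ε, s)` and fixing `1`. -/
noncomputable def neg : Ext A →ₗ[A] Ext A := Finsupp.lmapDomain A A negB

/-- The signed basis element attached to a sign and a finite set; the empty set
gives the unit (on which the negation acts trivially). -/
noncomputable def bElem (ε : Bool) (t : Finset ℕ) : Ext A :=
  if h : t.Nonempty then Finsupp.single (some (ε, ⟨t, h⟩)) 1 else Finsupp.single none 1

/-- The unit `1` of `⋀`. -/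
noncomputable def one : Ext A := Finsupp.single (none : XB) 1

/-- The generator `x^i`. -/
noncomputable def xg (i : ℕ) : Ext A := bElem A true {i}

/-- `true` iff merging the decreasing enumerations of the disjoint sets `s`, `t`
(concatenated as `s ++ t`) into a single decreasing enumeration is an even
permutation, i.e. iff the number of pairs `(a ∈ s, b ∈ t)` with `a < b` is even. -/
def mergeEven (s t : Finset ℕ) : Bool :=
  decide ((∑ a ∈ s, (t.filter (fun b => a < b)).card) % 2 = 0)

/-- Wedge product of two basis elements: concatenate the tuples and multiply the
signs (`0` if the tuples share an entry). -/
noncomputable def wB : XB → XB → Ext A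
  | none, c => Finsupp.single c 1
  | some b, none => Finsupp.single (some b) 1
  | some (ε, s), some (δ, t) =>
      if s.1 ∩ t.1 = ∅ then bElem A ((ε == δ) == mergeEven s.1 t.1) (s.1 ∪ t.1) else 0

/-- The wedge product on `⋀`, extended `A`-bilinearly from the basis. -/
noncomputable def wedge (u v : Ext A) : Ext A :=
  u.sum fun b a => v.sum fun c a' => (a * a') • wB A b c

/-- Extend a map defined on the basis `A`-linearly to all of `⋀`. -/
noncomputable def ext1 (g : XB → Ext A) (u : Ext A) : Ext A := u.sum fun b a => a • g b

/-- Quasi-zeros: elements of the form `w + (−)w`. -/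
def IsQuasiZero (q : Ext A) : Prop := ∃ w : Ext A, q = w + neg A w

/-- The surpassing relation: `u ⪯ v` iff `v = u + q` for some quasi-zero `q`. -/
def Prec (u v : Ext A) : Prop := ∃ q : Ext A, IsQuasiZero A q ∧ v = u + q

/-- Twist an element by a sign. -/
noncomputable def twist (ε : Bool) (u : Ext A) : Ext A := if ε then u else neg A u

/-- `k`-fold application of the negation map. -/
noncomputable def negpow (k : ℕ) (u : Ext A) : Ext A := if k % 2 = 0 then u else neg A u

/-- Wedge product of a list of elements of `⋀`. -/
noncomputable def wedgeL (l : List (Ext A)) : Ext A := l.foldr (wedge A) (one A)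

/-- The wedge monomial `x^{j_1} ∧ ⋯ ∧ x^{j_r}` for an arbitrary tuple. -/
noncomputable def wedgeMon (l : List ℕ) : Ext A := wedgeL A (l.map (xg A))

/-- The decreasing enumeration of a finite set of naturals. -/
def descList (s : Finset ℕ) : List ℕ := (s.sort (· ≤ ·)).reverse

/-- The contraction `∂^j ⌟` on basis elements:
`∂^j ⌟ (x^{i_1} ∧ ⋯ ∧ x^{i_r}) = Σ_k (−)^{k−1}[i_k = j]·x^{i_1} ∧ ⋯ ∧ x^{i_{k-1}} ∧ x^{i_{k+1}} ∧ ⋯ ∧ x^{i_r}`,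
`∂^j ⌟ 1 = 0`; it commutes with the negation map. -/
noncomputable def contraB (j : ℕ) : XB → Ext A
  | none => 0
  | some (ε, s) =>
      if j ∈ s.1 then
        twist A ε (negpow A ((s.1.filter (fun b => j < b)).card) (bElem A true (s.1.erase j)))
      else 0

/-- The contraction `∂^j ⌟` on `⋀`, extended `A`-linearly. -/
noncomputable def contra (j : ℕ) (u : Ext A) : Ext A := ext1 A (contraB A j) u

/-- Make an `A`-linear operator on `⋀` commuting with the negation map out of a
coefficient family on decreasing lists (`F k l` = the `k`-th coefficient on the
monomial with decreasing tuple `l`); the unit is sent to itself in degree `0`. -/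
noncomputable def hsOn (F : ℕ → List ℕ → Ext A) (k : ℕ) : XB → Ext A
  | none => if k = 0 then one A else 0
  | some (ε, s) => twist A ε (F k (descList s.1))

open Finset.Nat in
/-- Coefficient of `z^k` in `σ₊(z)` on a monomial:
`σ_k (x^{i_1} ∧ ⋯ ∧ x^{i_r}) = Σ_{k_1+⋯+k_r=k} x^{i_1+k_1} ∧ ⋯ ∧ x^{i_r+k_r}`. -/
noncomputable def sigPlusL (k : ℕ) (l : List ℕ) : Ext A :=
  ∑ c ∈ antidiagonalTuple l.length k,
    wedgeMon A (List.ofFn fun i : Fin l.length => l.get i + c i)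

/-- Coefficient of `z^k` in the Schubert derivation `σ₊(z)`. -/
noncomputable def sigPlus (k : ℕ) : Ext A → Ext A := ext1 A (hsOn A (sigPlusL A) k)

open Finset.Nat in
/-- Coefficient of `w^{−k}` in `σ₋(w)`, where `σ₋(w) x^j = Σ_{k=0}^{j} x^{j−k} w^{−k}`. -/
noncomputable def sigMinusL (k : ℕ) (l : List ℕ) : Ext A :=
  ∑ c ∈ antidiagonalTuple l.length k,
    if ∀ i, c i ≤ l.get i then
      wedgeMon A (List.ofFn fun i : Fin l.length => l.get i - c i)
    else 0

/-- Coefficient of `w^{−k}` in the Schubert derivation `σ₋(w)`. -/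
noncomputable def sigMinus (k : ℕ) : Ext A → Ext A := ext1 A (hsOn A (sigMinusL A) k)

open Finset.Nat in
/-- Coefficient of `z^{−k}` in `σ̄₋(z)`, where `σ̄₋(z) x^j = x^j + ((−)x^{j−1}) z^{−1}`
(`x^{−1} := 0`). -/
noncomputable def sbarMinusL (k : ℕ) (l : List ℕ) : Ext A :=
  negpow A k (∑ c ∈ antidiagonalTuple l.length k,
    if ∀ i, c i ≤ 1 ∧ c i ≤ l.get i then
      wedgeMon A (List.ofFn fun i : Fin l.length => l.get i - c i)
    else 0)

/-- Coefficient of `z^{−k}` in the Schubert derivation `σ̄₋(z)`. -/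
noncomputable def sbarMinus (k : ℕ) : Ext A → Ext A := ext1 A (hsOn A (sbarMinusL A) k)

open Finset.Nat in
/-- Coefficient of `w^k` in `σ̄₊(w)`, where `σ̄₊(w) x^j = x^j + ((−)x^{j+1}) w`. -/
noncomputable def sbarPlusL (k : ℕ) (l : List ℕ) : Ext A :=
  negpow A k (∑ c ∈ antidiagonalTuple l.length k,
    if ∀ i, c i ≤ 1 then
      wedgeMon A (List.ofFn fun i : Fin l.length => l.get i + c i)
    else 0)

/-- Coefficient of `w^k` in the Schubert derivation `σ̄₊(w)`. -/
noncomputable def sbarPlus (k : ℕ) : Ext A → Ext A := ext1 A (hsOn A (sbarPlusL A) k)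

/-- The basis element `[x]^r_λ = x^{r−1+λ_1} ∧ x^{r−2+λ_2} ∧ ⋯ ∧ x^{λ_r}`
attached to a partition `λ` with at most `r` parts. -/
noncomputable def xlam (r : ℕ) (lam : Fin r → ℕ) : Ext A :=
  wedgeMon A (List.ofFn fun i : Fin r => (r - 1 - (i : ℕ)) + lam i)

end ExtSemi
namespace ExtSemi

section gen
variable (A : Type*) [CommSemiring A]

theorem neg_single (b : XB) (x : A) : neg A (Finsupp.single b x) = Finsupp.single (negB b) x := by
  simp [neg, Finsupp.mapDomain_single]

theorem ext1_add (g : XB → Ext A) (u v : Ext A) :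
    ext1 A g (u + v) = ext1 A g u + ext1 A g v := by
  unfold ext1
  exact Finsupp.sum_add_index' (by simp) (by intros; rw [add_smul])

theorem ext1_zero (g : XB → Ext A) : ext1 A g 0 = 0 := by
  simp [ext1]

theorem ext1_single (g : XB → Ext A) (b : XB) (x : A) :
    ext1 A g (Finsupp.single b x) = x • g b := by
  simp [ext1]

noncomputable def ext1H (g : XB → Ext A) : Ext A →+ Ext A where
  toFun := ext1 A g
  map_zero' := ext1_zero A g
  map_add' := ext1_add A g

theorem wedge_eq (u v : Ext A) : wedge A u v = ext1 A (fun b => ext1 A (wB A b) v) u := by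
  unfold wedge ext1
  simp only [Finsupp.smul_sum, smul_smul]

theorem wedge_add_right (u v w : Ext A) :
    wedge A u (v + w) = wedge A u v + wedge A u w := by
  simp only [wedge_eq, ext1_add]
  simp [ext1, Finsupp.sum, Finset.sum_add_distrib]

theorem wedge_single_left (b : XB) (v : Ext A) :
    wedge A (Finsupp.single b 1) v = ext1 A (wB A b) v := by
  rw [wedge_eq, ext1_single, one_smul]

theorem xg_eq (i : ℕ) : xg A i = Finsupp.single (some (true, ⟨{i}, by simp⟩)) 1 := by
  simp [xg, bElem]

theorem wedge_single_single (b c : XB) (y : A) :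
    wedge A (Finsupp.single b 1) (Finsupp.single c y) = y • wB A b c := by
  rw [wedge_single_left, ext1_single]

theorem wedgeMon_cons (i : ℕ) (l : List ℕ) :
    wedgeMon A (i :: l) = wedge A (xg A i) (wedgeMon A l) := rfl

theorem bElem_ne (ε : Bool) (t : Finset ℕ) (h : t.Nonempty) :
    bElem A ε t = Finsupp.single (some (ε, ⟨t, h⟩)) 1 := by
  simp [bElem, h]

theorem xg_wedge_one (i : ℕ) : wedge A (xg A i) (one A) = xg A i := by
  rw [xg_eq, one, wedge_single_single]; simp [wB]

theorem xg_wedge_bElem (i : ℕ) (ε : Bool) (t : Finset ℕ) (h : ε = true ∨ t.Nonempty) :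
    wedge A (xg A i) (bElem A ε t) =
      if i ∈ t then 0 else bElem A (ε == decide ((t.filter (fun b => i < b)).card % 2 = 0)) (insert i t) := by
  by_cases ht : t.Nonempty
  · rw [bElem_ne A ε t ht, xg_eq, wedge_single_single]
    simp only [wB, one_smul, mergeEven, Finset.sum_singleton]
    by_cases hi : i ∈ t
    · simp [hi]
    · simp only [hi, if_false]
      rw [if_pos (Finset.singleton_inter_of_notMem hi)]
      congr 1
      cases ε <;> simp
  · have h1 : ε = true := by tauto
    simp only [Finset.not_nonempty_iff_eq_empty] at ht
    subst ht h1
    have : bElem A true ∅ = one A := by simp [bElem, one]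
    rw [this, xg_wedge_one]
    simp [xg]

theorem wedgeMon_form (l : List ℕ) : ∃ ε : Bool, (ε = true ∨ l.toFinset.Nonempty) ∧
    wedgeMon A l = if l.Nodup then bElem A ε l.toFinset else 0 := by
  induction l with
  | nil => exact ⟨true, Or.inl rfl, by simp [wedgeMon, wedgeL, bElem, one]⟩
  | cons i l ih =>
    obtain ⟨ε, h, e⟩ := ih
    refine ⟨(ε == decide ((l.toFinset.filter (fun b => i < b)).card % 2 = 0)), Or.inr (by simp), ?_⟩
    rw [wedgeMon_cons, e]
    by_cases hl : l.Nodup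
    · rw [if_pos hl, xg_wedge_bElem A i ε _ h]
      by_cases hi : i ∈ l <;> simp [hi, hl]
    · simp [hl, wedge]

theorem wedgeMon_sorted (l : List ℕ) (hl : l.Pairwise (· > ·)) :
    wedgeMon A l = bElem A true l.toFinset := by
  induction l with
  | nil => simp [wedgeMon, wedgeL, bElem, one]
  | cons i l ih =>
    rw [List.pairwise_cons] at hl
    rw [wedgeMon_cons, ih hl.2, xg_wedge_bElem A i true _ (Or.inl rfl)]
    have h1 : i ∉ l.toFinset := by
      intro h; simpa using hl.1 i (by simpa using h)
    have h2 : l.toFinset.filter (fun b => i < b) = ∅ := by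
      ext b; simp; intro hb; exact (hl.1 b hb).le
    rw [if_neg h1, h2]; simp

theorem descList_sorted (l : List ℕ) (hl : l.Pairwise (· > ·)) : descList l.toFinset = l := by
  unfold descList
  have : l.toFinset = l.reverse.toFinset := by simp
  rw [this, (List.toFinset_sort (· ≤ ·) (l := l.reverse) ?_).2 ?_]
  · simp
  · rw [List.nodup_reverse]; exact hl.imp (fun h => ne_of_gt h)
  · rw [List.pairwise_reverse]; exact hl.imp (fun h => le_of_lt h)

theorem ext1_hsOn_sorted (F : ℕ → List ℕ → Ext A) (k : ℕ) (l : List ℕ) (h0 : l ≠ [])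
    (hl : l.Pairwise (· > ·)) : ext1 A (hsOn A F k) (wedgeMon A l) = F k l := by
  have hne : l.toFinset.Nonempty := by simpa using h0
  rw [wedgeMon_sorted A l hl, bElem_ne A true _ hne, ext1_single, one_smul]
  simp [hsOn, twist, descList_sorted l hl]

theorem sigPlusL_eq (k n : ℕ) (l : List ℕ) (h : l.length = n) (f : Fin n → ℕ)
    (hf : ∀ i, f i = l.get (i.cast h.symm)) :
    sigPlusL A k l = ∑ c ∈ Finset.Nat.antidiagonalTuple n k, wedgeMon A (List.ofFn (fun i => f i + c i)) := by
  subst h; simp [sigPlusL, hf]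

theorem sigPlusL_ofFn (k n : ℕ) (f : Fin n → ℕ) :
    sigPlusL A k (List.ofFn f) = ∑ c ∈ Finset.Nat.antidiagonalTuple n k, wedgeMon A (List.ofFn (fun i => f i + c i)) :=
  sigPlusL_eq A k n _ (by simp) f (by intro i; simp)

theorem sbarMinusL_eq (k n : ℕ) (l : List ℕ) (h : l.length = n) (f : Fin n → ℕ)
    (hf : ∀ i, f i = l.get (i.cast h.symm)) :
    sbarMinusL A k l = negpow A k (∑ c ∈ Finset.Nat.antidiagonalTuple n k,
      if ∀ i, c i ≤ 1 ∧ c i ≤ f i then wedgeMon A (List.ofFn (fun i => f i - c i)) else 0) := by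
  subst h; simp [sbarMinusL, hf]

theorem sbarMinusL_ofFn (k n : ℕ) (f : Fin n → ℕ) :
    sbarMinusL A k (List.ofFn f) = negpow A k (∑ c ∈ Finset.Nat.antidiagonalTuple n k,
      if ∀ i, c i ≤ 1 ∧ c i ≤ f i then wedgeMon A (List.ofFn (fun i => f i - c i)) else 0) :=
  sbarMinusL_eq A k n _ (by simp) f (by intro i; simp)

theorem pairwise_ofFn_anti {n : ℕ} (f : Fin n → ℕ) (hf : StrictAnti f) :
    (List.ofFn f).Pairwise (· > ·) := by
  rw [List.pairwise_ofFn]; intro i j h; exact hf h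

theorem negB_negB (b : XB) : negB (negB b) = b := by
  rcases b with _ | ⟨ε, s⟩ <;> simp [negB]

theorem neg_neg' (u : Ext A) : neg A (neg A u) = u := by
  induction u using Finsupp.induction_linear with
  | zero => simp
  | add f g hf hg => simp [hf, hg]
  | single b x => rw [neg_single, neg_single, negB_negB]

theorem neg_apply (u : Ext A) (b : XB) : neg A u b = u (negB b) := by
  induction u using Finsupp.induction_linear with
  | zero => simp
  | add f g hf hg => simp [hf, hg]
  | single c x =>
    rw [neg_single, Finsupp.single_apply, Finsupp.single_apply]
    congr 1
    apply propext
    constructor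
    · rintro rfl; rw [negB_negB]
    · rintro rfl; rw [negB_negB]

theorem ext1_neg (F : ℕ → List ℕ → Ext A) (k : ℕ) (u : Ext A) (hu : u none = 0) :
    ext1 A (hsOn A F k) (neg A u) = neg A (ext1 A (hsOn A F k) u) := by
  unfold ext1
  rw [neg, Finsupp.lmapDomain_apply, Finsupp.sum_mapDomain_index (by simp) (by intros; rw [add_smul]),
    Finsupp.sum, Finsupp.sum, map_sum]
  apply Finset.sum_congr rfl
  rintro (_ | ⟨ε, s⟩) hb
  · simp [hu]
  · rw [map_smul]
    congr 1
    have := neg_neg' A (F k (descList s.1))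
    cases ε <;> simp [hsOn, negB, twist]
    · exact this.symm
    · rfl

end gen

/-! Transfer from the naturals -/
section transfer
variable (A : Type*) [CommSemiring A]

noncomputable def T : Ext ℕ →+ Ext A := Finsupp.mapRange.addMonoidHom (Nat.castAddMonoidHom A)

theorem T_single (b : XB) (n : ℕ) : T A (Finsupp.single b n) = Finsupp.single b (n : A) := by
  simp [T]

theorem T_neg (u : Ext ℕ) : T A (neg ℕ u) = neg A (T A u) := by
  induction u using Finsupp.induction_linear with
  | zero => simp
  | add f g hf hg => simp [hf, hg]
  | single b x => simp only [neg_single, T_single]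

theorem T_smul (n : ℕ) (u : Ext ℕ) : T A (n • u) = (n : A) • T A u := by
  rw [map_nsmul, Nat.cast_smul_eq_nsmul]

theorem T_bElem (ε t) : T A (bElem ℕ ε t) = bElem A ε t := by
  unfold bElem; split_ifs <;> simp [T_single]

theorem T_ext1 (g : XB → Ext ℕ) (g' : XB → Ext A) (h : ∀ b, T A (g b) = g' b) (u : Ext ℕ) :
    T A (ext1 ℕ g u) = ext1 A g' (T A u) := by
  induction u using Finsupp.induction_linear with
  | zero => simp [ext1_zero]
  | add f g hf hg => simp [ext1_add, hf, hg]
  | single b x => rw [ext1_single, T_single, ext1_single, T_smul, h]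

theorem T_wB (b c : XB) : T A (wB ℕ b c) = wB A b c := by
  rcases b with _ | ⟨ε, s⟩ <;> rcases c with _ | ⟨δ, t⟩ <;> simp only [wB, T_single, Nat.cast_one]
  split_ifs
  · rw [T_bElem]
  · simp

theorem T_wedge (u v : Ext ℕ) : T A (wedge ℕ u v) = wedge A (T A u) (T A v) := by
  simp only [wedge_eq]
  exact T_ext1 A _ _ (fun b => T_ext1 A _ _ (T_wB A b) v) u

theorem T_one : T A (one ℕ) = one A := by simp [one, T_single]

theorem T_xg (i : ℕ) : T A (xg ℕ i) = xg A i := T_bElem A _ _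

theorem T_wedgeMon (l : List ℕ) : T A (wedgeMon ℕ l) = wedgeMon A l := by
  induction l with
  | nil => exact T_one A
  | cons i l ih => rw [wedgeMon_cons, wedgeMon_cons, T_wedge, ih, T_xg]

theorem T_negpow (k : ℕ) (u : Ext ℕ) : T A (negpow ℕ k u) = negpow A k (T A u) := by
  unfold negpow; split_ifs <;> simp [T_neg]

theorem T_hsOn (F : ℕ → List ℕ → Ext ℕ) (F' : ℕ → List ℕ → Ext A)
    (h : ∀ k l, T A (F k l) = F' k l) (k : ℕ) (b : XB) :
    T A (hsOn ℕ F k b) = hsOn A F' k b := by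
  rcases b with _ | ⟨ε, s⟩
  · simp only [hsOn]; split_ifs <;> simp [T_one]
  · simp only [hsOn, twist]; split_ifs <;> simp [T_neg, h]

theorem T_sigPlus (k : ℕ) (u : Ext ℕ) : T A (sigPlus ℕ k u) = sigPlus A k (T A u) := by
  refine T_ext1 A _ _ (T_hsOn A _ _ ?_ k) u
  intro k l
  simp [sigPlusL, T_wedgeMon]

theorem T_sbarMinus (k : ℕ) (u : Ext ℕ) : T A (sbarMinus ℕ k u) = sbarMinus A k (T A u) := by
  refine T_ext1 A _ _ (T_hsOn A _ _ ?_ k) u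
  intro k l
  simp only [sbarMinusL, T_negpow, map_sum]
  congr 1
  refine Finset.sum_congr rfl fun c _ => ?_
  split_ifs <;> simp [T_wedgeMon]

theorem T_prec (u v : Ext ℕ) (h : Prec ℕ u v) : Prec A (T A u) (T A v) := by
  obtain ⟨q, ⟨w, rfl⟩, rfl⟩ := h
  exact ⟨_, ⟨T A w, rfl⟩, by simp [T_neg]⟩

end transfer

/-! criterion over the naturals -/

open Classical in
theorem prec_crit (u v : Ext ℕ) (hu0 : u none = 0) (hv0 : v none = 0)
    (hu : ∀ s, u (some (true, s)) = 0 ∨ u (some (false, s)) = 0)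
    (h : ∀ s, (v (some (true, s)) : ℤ) - v (some (false, s)) = u (some (true, s)) - u (some (false, s))) :
    Prec ℕ u v := by
  have hle : ∀ ε s, u (some (ε, s)) ≤ v (some (ε, s)) := by
    intro ε s
    have h1 := h s
    rcases hu s with h2 | h2 <;> cases ε <;> omega
  refine ⟨v - u, ⟨(v - u).filter (fun b => ∃ s, b = some (true, s)), ?_⟩, ?_⟩
  · ext b
    rw [Finsupp.add_apply, neg_apply]
    rcases b with _ | ⟨ε, s⟩
    · simp [negB, hv0]
    · have h1 := h s
      have h2 := hle true s
      have h3 := hle false s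
      cases ε <;> simp [negB, Finsupp.filter_apply]
      omega
  · ext b
    rcases b with _ | ⟨ε, s⟩
    · simp [hu0, hv0]
    · have h1 := hle ε s
      simp only [Finsupp.add_apply, Finsupp.tsub_apply]
      omega

end ExtSemi
namespace ExtSemi

open Polynomial

/-- signed coefficient -/
noncomputable def D (s : Finset ℕ) : Ext ℕ →+ ℤ :=
  if h : s.Nonempty then
    (Nat.castAddMonoidHom ℤ).comp (Finsupp.applyAddHom (some (true, ⟨s, h⟩))) -
      (Nat.castAddMonoidHom ℤ).comp (Finsupp.applyAddHom (some (false, ⟨s, h⟩)))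
  else (Nat.castAddMonoidHom ℤ).comp (Finsupp.applyAddHom none)

theorem D_ne (s : Finset ℕ) (h : s.Nonempty) (u : Ext ℕ) :
    D s u = (u (some (true, ⟨s, h⟩)) : ℤ) - u (some (false, ⟨s, h⟩)) := by
  simp [D, h]

theorem D_empty (u : Ext ℕ) : D ∅ u = u none := by
  simp [D]

theorem D_neg (s : Finset ℕ) (h : s.Nonempty) (u : Ext ℕ) : D s (neg ℕ u) = - D s u := by
  rw [D_ne s h, D_ne s h, neg_apply, neg_apply]
  simp [negB]

theorem D_bElem (s t : Finset ℕ) (ε : Bool) :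
    D s (bElem ℕ ε t) = if t = s then (if ε = true ∨ s = ∅ then 1 else -1) else 0 := by
  by_cases hs : s.Nonempty
  · have hs' : s ≠ ∅ := hs.ne_empty
    rw [D_ne s hs]
    by_cases ht : t.Nonempty
    · rw [bElem_ne ℕ ε t ht]
      cases ε <;> simp [Finsupp.single_apply, hs'] <;> split_ifs <;> simp
    · have : t ≠ s := by rintro rfl; exact ht hs
      simp [bElem, ht, this]
  · rw [Finset.not_nonempty_iff_eq_empty] at hs
    subst hs
    rw [D_empty]
    by_cases ht : t.Nonempty
    · rw [bElem_ne ℕ ε t ht]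
      simp [ht.ne_empty]
    · rw [Finset.not_nonempty_iff_eq_empty] at ht
      subst ht
      simp [bElem]

theorem D_wedge_xg (s : Finset ℕ) (i : ℕ) (u : Ext ℕ) :
    D s (wedge ℕ (xg ℕ i) u) =
      if i ∈ s then (-1) ^ (s.filter (fun b => i < b)).card * D (s.erase i) u else 0 := by
  induction u using Finsupp.induction_linear with
  | zero => simp [wedge]
  | add f g hf hg =>
    rw [wedge_add_right, map_add, hf, hg, map_add]
    split_ifs <;> ring
  | single b x =>
    obtain ⟨ε, t, hεt, hb⟩ : ∃ (ε : Bool) (t : Finset ℕ), (ε = true ∨ t.Nonempty) ∧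
        Finsupp.single b 1 = bElem ℕ ε t := by
      rcases b with _ | ⟨ε, t, ht⟩
      · exact ⟨true, ∅, Or.inl rfl, by simp [bElem]⟩
      · exact ⟨ε, t, Or.inr ht, by simp [bElem, ht]⟩
    have h1 : Finsupp.single b x = x • bElem ℕ ε t := by rw [← hb]; simp
    have h2 : wedge ℕ (xg ℕ i) (x • bElem ℕ ε t) = x • wedge ℕ (xg ℕ i) (bElem ℕ ε t) := by
      rw [← h1, ← hb, xg_eq, wedge_single_single, wedge_single_single]; simp
    rw [h1, h2, map_nsmul, map_nsmul, xg_wedge_bElem ℕ i ε t hεt]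
    suffices H : D s (if i ∈ t then 0 else bElem ℕ (ε == decide ((t.filter (fun b => i < b)).card % 2 = 0)) (insert i t)) = if i ∈ s then (-1) ^ (s.filter (fun b => i < b)).card * D (s.erase i) (bElem ℕ ε t) else 0 by
      rw [H]; split_ifs <;> simp; ring
    rw [D_bElem]
    by_cases hi : i ∈ t
    · have : t ≠ s.erase i := by rintro rfl; simp at hi
      simp [hi, this]
    · rw [if_neg hi, D_bElem]
      by_cases his : i ∈ s
      · rw [if_pos his]
        by_cases hts : insert i t = s
        · subst hts
          have h3 : (insert i t).erase i = t := Finset.erase_insert hi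
          have h4 : (insert i t).filter (fun b => i < b) = t.filter (fun b => i < b) := by
            rw [Finset.filter_insert]; simp
          rw [h3, h4]
          have h5 : (ε = true ∨ t = ∅) ↔ ε = true := by
            rcases hεt with h | h
            · simp [h]
            · simp [h.ne_empty]
          rcases Nat.even_or_odd (t.filter (fun b => i < b)).card with he | ho
          · rw [he.neg_one_pow]
            rw [Nat.even_iff] at he
            simp [he, h5]
          · rw [ho.neg_one_pow]
            rw [Nat.odd_iff] at ho
            simp only [h5, ho]
            cases ε <;> simp
        · have : t ≠ s.erase i := by
            rintro rfl; exact hts (Finset.insert_erase his)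
          simp [hts, this]
      · have : insert i t ≠ s := by rintro rfl; simp at his
        simp [his, this]

theorem D_wedgeMon_card (s : Finset ℕ) (l : List ℕ) (h : l.length ≠ s.card) :
    D s (wedgeMon ℕ l) = 0 := by
  obtain ⟨ε, -, e⟩ := wedgeMon_form ℕ l
  rw [e]
  split_ifs with hn
  · rw [D_bElem, if_neg]
    rintro rfl
    exact h (List.toFinset_card_of_nodup hn).symm
  · simp

/-- Kronecker matrix -/
def dl {n : ℕ} (l s : Fin n → ℕ) : Matrix (Fin n) (Fin n) ℤ :=
  Matrix.of fun i j => if l i = s j then 1 else 0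

theorem D_wedgeMon_det (n : ℕ) : ∀ (s l : Fin n → ℕ) (_ : StrictAnti s),
    D (Finset.univ.image s) (wedgeMon ℕ (List.ofFn l)) = (dl l s).det := by
  induction n with
  | zero =>
    intro s l _
    simp [wedgeMon, wedgeL, one, D_empty]
  | succ n ih =>
    intro s l hs
    rw [List.ofFn_succ, wedgeMon_cons, D_wedge_xg, Matrix.det_succ_row_zero]
    split_ifs with h
    · obtain ⟨j, -, hj⟩ := Finset.mem_image.1 h
      rw [Finset.sum_eq_single j]
      · have h1 : (Finset.univ.image s).filter (fun b => l 0 < b) = (Finset.Iio j).image s := by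
          ext b
          simp only [Finset.mem_filter, Finset.mem_image, Finset.mem_univ, true_and, Finset.mem_Iio]
          constructor
          · rintro ⟨⟨k, rfl⟩, hk⟩
            rw [← hj] at hk
            exact ⟨k, hs.lt_iff_gt.1 hk, rfl⟩
          · rintro ⟨k, hk, rfl⟩
            rw [← hj]
            exact ⟨⟨k, rfl⟩, hs hk⟩
        rw [h1, Finset.card_image_of_injective _ hs.injective, Fin.card_Iio]
        have h2 : (Finset.univ.image s).erase (l 0) = Finset.univ.image (s ∘ j.succAbove) := by
          ext b
          simp only [Finset.mem_erase, Finset.mem_image, Finset.mem_univ, true_and, Function.comp]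
          constructor
          · rintro ⟨hb, k, rfl⟩
            have : k ≠ j := by rintro rfl; exact hb hj
            obtain ⟨m, rfl⟩ := Fin.exists_succAbove_eq this
            exact ⟨m, rfl⟩
          · rintro ⟨k, rfl⟩
            refine ⟨?_, _, rfl⟩
            rw [← hj]
            exact hs.injective.ne (Fin.succAbove_ne _ _)
        rw [h2, ih _ _ (hs.comp_strictMono (Fin.strictMono_succAbove j))]
        simp only [dl, Matrix.of_apply, hj, if_true, mul_one]
        rfl
      · intro k _ hk
        have : l 0 ≠ s k := by
          rw [← hj]; exact hs.injective.ne (Ne.symm hk)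
        simp [dl, this]
      · simp
    · symm
      apply Finset.sum_eq_zero
      intro j _
      have : l 0 ≠ s j := by
        intro e; exact h (Finset.mem_image.2 ⟨j, Finset.mem_univ _, e.symm⟩)
      simp [dl, this]

/-- generating matrix -/
noncomputable def gm {n : ℕ} (l s : Fin n → ℕ) : Matrix (Fin n) (Fin n) ℤ[X] :=
  Matrix.of fun i j => if l i ≤ s j then X ^ (s j - l i) else 0

theorem coeff_gm {n : ℕ} (l s : Fin n → ℕ) (b : ℕ) :
    (gm l s).det.coeff b =
      ∑ e ∈ Finset.Nat.antidiagonalTuple n b, (dl (fun i => l i + e i) s).det := by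
  simp only [← Matrix.det_transpose (gm l s), ← Matrix.det_transpose (dl _ s)]
  simp only [Matrix.det_apply', Matrix.transpose_apply, finsetSum_coeff]
  rw [Finset.sum_comm]
  refine Finset.sum_congr rfl fun σ _ => ?_
  rw [← Finset.mul_sum]
  have : ((Equiv.Perm.sign σ : ℤ) : ℤ[X]) = C ((Equiv.Perm.sign σ : ℤ)) := by simp
  rw [this, coeff_C_mul]
  simp only [Int.cast_id]
  congr 1
  simp only [gm, dl, Matrix.of_apply]
  by_cases h : ∀ i, l i ≤ s (σ i)
  · simp only [h, if_true, Finset.prod_pow_eq_pow_sum, coeff_X_pow]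
    simp only [Finset.prod_ite_zero, Finset.prod_const_one, Finset.mem_univ, true_imp_iff]
    have h2 : ∀ e : Fin n → ℕ, (∀ i, l i + e i = s (σ i)) ↔ e = fun i => s (σ i) - l i := by
      intro e
      rw [funext_iff]
      refine forall_congr' fun i => ?_
      have := h i
      omega
    simp only [h2]
    rw [Finset.sum_ite_eq']
    simp only [Finset.Nat.mem_antidiagonalTuple, eq_comm]
  · push Not at h
    obtain ⟨i, hi⟩ := h
    rw [Finset.prod_eq_zero (Finset.mem_univ i) (by simp [hi])]
    rw [coeff_zero, eq_comm]
    apply Finset.sum_eq_zero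
    intro e _
    apply Finset.prod_eq_zero (Finset.mem_univ i)
    rw [if_neg]; omega

theorem D_sigPlus (n b : ℕ) (hn : 0 < n) (l s : Fin n → ℕ) (hl : Antitone l) (hs : StrictAnti s) :
    D (Finset.univ.image s) (sigPlus ℕ b (wedgeMon ℕ (List.ofFn l))) = (gm l s).det.coeff b := by
  by_cases hi : Function.Injective l
  · have hl' : StrictAnti l := hl.strictAnti_of_injective hi
    have h0 : List.ofFn l ≠ [] := by
      intro h; have := congrArg List.length h; simp at this; omega
    unfold sigPlus
    rw [ext1_hsOn_sorted ℕ _ b _ h0 (pairwise_ofFn_anti l hl'), sigPlusL_ofFn, map_sum, coeff_gm]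
    exact Finset.sum_congr rfl fun e _ => D_wedgeMon_det n s _ hs
  · obtain ⟨ε, -, e⟩ := wedgeMon_form ℕ (List.ofFn l)
    rw [if_neg (by rwa [List.nodup_ofFn])] at e
    rw [e]
    unfold sigPlus
    rw [ext1_zero, map_zero]
    unfold Function.Injective at hi
    push Not at hi
    obtain ⟨i, j, hij, hne⟩ := hi
    rw [Matrix.det_zero_of_row_eq hne, coeff_zero]
    funext k
    simp [gm, hij]

end ExtSemi
namespace ExtSemi

open Polynomial

theorem none_wedgeMon (l : List ℕ) (h : l ≠ []) : wedgeMon ℕ l none = 0 := by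
  have := D_wedgeMon_card ∅ l (by simpa using h)
  rw [D_empty] at this
  exact_mod_cast this

theorem none_neg (u : Ext ℕ) : neg ℕ u none = u none := by
  rw [neg_apply]; rfl

theorem none_ext1 (F : ℕ → List ℕ → Ext ℕ) (hF : ∀ k l, l ≠ [] → F k l none = 0) (k : ℕ)
    (u : Ext ℕ) (hu : u none = 0) : ext1 ℕ (hsOn ℕ F k) u none = 0 := by
  unfold ext1
  rw [Finsupp.sum, Finsupp.finsetSum_apply]
  apply Finset.sum_eq_zero
  rintro (_ | ⟨ε, s, hs⟩) hb
  · simp [hu]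
  · have h1 : descList s ≠ [] := by
      intro h
      have := congrArg List.length h
      simp [descList] at this
      exact hs.ne_empty this
    have h2 := hF k _ h1
    rw [Finsupp.smul_apply]
    simp only [hsOn, twist]
    split_ifs
    · rw [h2]; simp
    · rw [none_neg, h2]; simp

theorem none_sigPlus (k : ℕ) (u : Ext ℕ) (hu : u none = 0) : sigPlus ℕ k u none = 0 := by
  refine none_ext1 _ ?_ k u hu
  intro k l hl
  simp only [sigPlusL, Finsupp.finsetSum_apply]
  refine Finset.sum_eq_zero fun c _ => none_wedgeMon _ ?_
  intro h; apply hl; simpa using h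

theorem none_sbarMinus (k : ℕ) (u : Ext ℕ) (hu : u none = 0) : sbarMinus ℕ k u none = 0 := by
  refine none_ext1 _ ?_ k u hu
  intro k l hl
  have : (∑ c ∈ Finset.Nat.antidiagonalTuple l.length k,
    if ∀ i, c i ≤ 1 ∧ c i ≤ l.get i then
      wedgeMon ℕ (List.ofFn fun i : Fin l.length => l.get i - c i)
    else 0) none = 0 := by
    simp only [Finsupp.finsetSum_apply]
    refine Finset.sum_eq_zero fun c _ => ?_
    split_ifs
    · refine none_wedgeMon _ ?_
      intro h; apply hl; simpa using h
    · simp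
  simp only [sbarMinusL, negpow]
  split_ifs
  · exact this
  · rw [none_neg]; exact this

theorem ofFn_ne_nil {n : ℕ} (hn : 0 < n) (l : Fin n → ℕ) : List.ofFn l ≠ [] := by
  intro h; have := congrArg List.length h; simp at this; omega

theorem D_expand (S : Finset ℕ) (hS : S.Nonempty) (n b d : ℕ) (hn : 0 < n) (L : Fin n → ℕ)
    (hL : StrictAnti L) :
    D S (sigPlus ℕ b (sbarMinus ℕ d (wedgeMon ℕ (List.ofFn L)))) =
      (-1) ^ d * ∑ c ∈ Finset.Nat.antidiagonalTuple n d,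
        if ∀ i, c i ≤ 1 ∧ c i ≤ L i then
          D S (sigPlus ℕ b (wedgeMon ℕ (List.ofFn fun i => L i - c i))) else 0 := by
  have h1 : sbarMinus ℕ d (wedgeMon ℕ (List.ofFn L)) = sbarMinusL ℕ d (List.ofFn L) :=
    ext1_hsOn_sorted ℕ _ d _ (ofFn_ne_nil hn L) (pairwise_ofFn_anti L hL)
  rw [h1, sbarMinusL_ofFn]
  set U := ∑ c ∈ Finset.Nat.antidiagonalTuple n d,
      if ∀ i, c i ≤ 1 ∧ c i ≤ L i then wedgeMon ℕ (List.ofFn (fun i => L i - c i)) else 0 with hU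
  have hU0 : U none = 0 := by
    rw [hU, Finsupp.finsetSum_apply]
    refine Finset.sum_eq_zero fun c _ => ?_
    split_ifs
    · exact none_wedgeMon _ (ofFn_ne_nil hn _)
    · simp
  have h2 : D S (sigPlus ℕ b U) = ∑ c ∈ Finset.Nat.antidiagonalTuple n d,
        if ∀ i, c i ≤ 1 ∧ c i ≤ L i then
          D S (sigPlus ℕ b (wedgeMon ℕ (List.ofFn fun i => L i - c i))) else 0 := by
    have : sigPlus ℕ b U = ext1H ℕ (hsOn ℕ (sigPlusL ℕ) b) U := rfl
    rw [this, hU, map_sum, map_sum]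
    refine Finset.sum_congr rfl fun c _ => ?_
    split_ifs
    · rfl
    · simp
  rw [← h2]
  unfold negpow
  split_ifs with hd
  · rw [(Nat.even_iff.2 hd).neg_one_pow, one_mul]
  · rw [(Nat.not_even_iff_odd.1 (fun h => hd (Nat.even_iff.1 h))).neg_one_pow]
    have : sigPlus ℕ b (neg ℕ U) = neg ℕ (sigPlus ℕ b U) := ext1_neg ℕ _ b U hU0
    rw [this, D_neg S hS]; ring

theorem D_sigPlus_card (S : Finset ℕ) (n b : ℕ) (hn : 0 < n) (l : Fin n → ℕ) (hl : Antitone l)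
    (hS : S.card ≠ n) : D S (sigPlus ℕ b (wedgeMon ℕ (List.ofFn l))) = 0 := by
  by_cases hi : Function.Injective l
  · have hl' : StrictAnti l := hl.strictAnti_of_injective hi
    unfold sigPlus
    rw [ext1_hsOn_sorted ℕ _ b _ (ofFn_ne_nil hn l) (pairwise_ofFn_anti l hl'), sigPlusL_ofFn, map_sum]
    exact Finset.sum_eq_zero fun e _ => D_wedgeMon_card _ _ (by simpa using Ne.symm hS)
  · obtain ⟨ε, -, e⟩ := wedgeMon_form ℕ (List.ofFn l)
    rw [if_neg (by rwa [List.nodup_ofFn])] at e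
    rw [e]
    unfold sigPlus
    rw [ext1_zero, map_zero]

theorem anti_sub {n : ℕ} (L c : Fin n → ℕ) (hL : StrictAnti L) (hc : ∀ i, c i ≤ 1 ∧ c i ≤ L i) :
    Antitone fun i => L i - c i := by
  intro i j h
  rcases h.eq_or_lt with rfl | h
  · exact le_rfl
  · have := hL h
    have := hc i
    show L j - c j ≤ L i - c i
    omega

/-- row index sets -/
def RA {n : ℕ} (L : Fin n → ℕ) (i : Fin n) : Finset ℕ := (Finset.range 2).filter (· ≤ L i)

noncomputable def rowM {n : ℕ} (L s : Fin n → ℕ) : Matrix (Fin n) (Fin n) ℤ[X] :=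
  Matrix.of fun i j => if L i = 0 then X ^ (s j + 1) else if L i = s j + 1 then -1 else 0

theorem mem_RA {n : ℕ} (L c : Fin n → ℕ) :
    c ∈ Fintype.piFinset (RA L) ↔ ∀ i, c i ≤ 1 ∧ c i ≤ L i := by
  simp only [Fintype.mem_piFinset, RA, Finset.mem_filter, Finset.mem_range]
  refine forall_congr' fun i => ?_
  omega

theorem det_expand {n : ℕ} (L s : Fin n → ℕ) :
    (rowM L s).det = ∑ c ∈ Fintype.piFinset (RA L),
      C ((-1) ^ (∑ i, c i)) * (X ^ (n - ∑ i, c i) * (gm (fun i => L i - c i) s).det) := by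
  have h1 : rowM L s = fun i => ∑ k ∈ RA L i,
      ((C ((-1) ^ k) * X ^ (1 - k) : ℤ[X]) • (fun j => if L i - k ≤ s j then (X : ℤ[X]) ^ (s j - (L i - k)) else 0)) := by
    funext i j
    rw [Finset.sum_apply]
    simp only [rowM, Matrix.of_apply, RA, Finset.sum_filter, Finset.sum_range_succ, Finset.sum_range_zero,
      Pi.smul_apply, smul_eq_mul]
    rcases h : L i with _ | m
    · simp [pow_succ']
    · simp
      rcases lt_trichotomy m (s j) with h | h | h
      · rw [if_neg (by omega), if_pos (by omega), if_pos (by omega), ← pow_succ']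
        have : s j - (m + 1) + 1 = s j - m := by omega
        rw [this]; simp
      · subst h; simp
      · rw [if_neg (by omega), if_neg (by omega), if_neg (by omega)]; simp
  have h2 := (Matrix.detRowAlternating (R := ℤ[X]) (n := Fin n)).toMultilinearMap.map_sum_finset
    (fun i k => ((C ((-1) ^ k) * X ^ (1 - k) : ℤ[X]) • (fun j => if L i - k ≤ s j then (X : ℤ[X]) ^ (s j - (L i - k)) else 0)))
    (RA L)
  rw [h1]
  refine h2.trans ?_
  refine Finset.sum_congr rfl fun c hc => ?_
  rw [MultilinearMap.map_smul_univ, smul_eq_mul, Finset.prod_mul_distrib, ← mul_assoc]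
  congr 1
  congr 1
  · rw [← map_prod, Finset.prod_pow_eq_pow_sum]
  · rw [Finset.prod_pow_eq_pow_sum]
    congr 1
    rw [mem_RA] at hc
    have : ∑ i, (1 - c i) + ∑ i, c i = n := by
      rw [← Finset.sum_add_distrib]
      rw [Finset.sum_congr rfl (g := fun _ => 1)]
      · simp
      · intro i _; have := hc i; omega
    omega

theorem coeff_rowM {r : ℕ} (L : Fin (r + 1) → ℕ) (m : Fin r → ℕ) (s : Fin (r + 1) → ℕ)
    (h0 : L (Fin.last r) = 0) (hm : ∀ i, L (Fin.castSucc i) = m i + 1) (N : ℕ) :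
    (rowM L s).det.coeff N = if 1 ≤ N then (dl (Fin.cons (N - 1) m) s).det else 0 := by
  rw [Matrix.det_succ_row _ (Fin.last r), Matrix.det_succ_row_zero]
  have hmin : ∀ j : Fin (r + 1), ((rowM L s).submatrix (Fin.last r).succAbove j.succAbove).det =
      C ((-1) ^ r * ((dl (Fin.cons (N - 1) m) s).submatrix Fin.succ j.succAbove).det) := by
    intro j
    have : (rowM L s).submatrix (Fin.last r).succAbove j.succAbove =
        C.mapMatrix (- ((dl (Fin.cons (N - 1) m) s).submatrix Fin.succ j.succAbove)) := by
      ext1 i k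
      simp only [rowM, dl, Matrix.submatrix_apply, Matrix.of_apply, Fin.succAbove_last, hm,
        RingHom.mapMatrix_apply, Matrix.map_apply, Matrix.neg_apply, Fin.cons_succ]
      rw [if_neg (by omega)]
      by_cases h : m i = s (j.succAbove k) <;> simp [h]
    rw [this, ← RingHom.map_det, Matrix.det_neg]
    simp
  simp only [hmin, finsetSum_coeff]
  have hs : ∀ j : Fin (r + 1), ((-1 : ℤ[X]) ^ (((Fin.last r : Fin (r + 1)) : ℕ) + (j : ℕ))) = C ((-1) ^ (r + (j : ℕ))) := by
    intro j; simp
  have key : ∀ j : Fin (r + 1), ((-1 : ℤ[X]) ^ (((Fin.last r : Fin (r + 1)) : ℕ) + (j : ℕ)) * rowM L s (Fin.last r) j *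
      C ((-1) ^ r * ((dl (Fin.cons (N - 1) m) s).submatrix Fin.succ j.succAbove).det)).coeff N =
      if 1 ≤ N then (-1) ^ (j : ℕ) * (dl (Fin.cons (N - 1) m) s) 0 j *
        ((dl (Fin.cons (N - 1) m) s).submatrix Fin.succ j.succAbove).det else 0 := by
    intro j
    rw [hs, coeff_mul_C, coeff_C_mul]
    generalize ((dl (Fin.cons (N - 1) m) s).submatrix Fin.succ j.succAbove).det = q
    simp only [rowM, dl, Matrix.of_apply, h0, if_true, coeff_X_pow, Fin.cons_zero]
    have hr : ((-1 : ℤ) ^ r) * (-1) ^ r = 1 := by rw [← mul_pow]; simp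
    by_cases hN : 1 ≤ N
    · rw [if_pos hN]
      by_cases hj : N = s j + 1
      · rw [if_pos hj, if_pos (by omega), pow_add]
        linear_combination ((-1) ^ (j : ℕ) * q) * hr
      · rw [if_neg hj, if_neg (by omega)]; ring
    · rw [if_neg hN, if_neg (by omega)]; ring
  simp only [key]
  split_ifs <;> simp

theorem sum_match {n : ℕ} (L s : Fin n → ℕ) (N : ℕ) :
    (∑ b ∈ Finset.range (N + 1), if N ≤ b + n then
      (-1) ^ (b + n - N) * ∑ c ∈ Finset.Nat.antidiagonalTuple n (b + n - N),
        (if ∀ i, c i ≤ 1 ∧ c i ≤ L i then (gm (fun i => L i - c i) s).det.coeff b else 0) else 0) =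
    (rowM L s).det.coeff N := by
  rw [det_expand, finsetSum_coeff]
  have h1 : ∀ b : ℕ, (if N ≤ b + n then
      (-1) ^ (b + n - N) * ∑ c ∈ Finset.Nat.antidiagonalTuple n (b + n - N),
        (if ∀ i, c i ≤ 1 ∧ c i ≤ L i then (gm (fun i => L i - c i) s).det.coeff b else 0) else 0) =
      ∑ c ∈ Fintype.piFinset (RA L), if N + ∑ i, c i = b + n then
        (-1) ^ (∑ i, c i) * (gm (fun i => L i - c i) s).det.coeff b else 0 := by
    intro b
    split_ifs with hb
    · rw [Finset.mul_sum]
      simp only [mul_ite, mul_zero]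
      rw [← Finset.sum_filter, ← Finset.sum_filter]
      have : (Finset.Nat.antidiagonalTuple n (b + n - N)).filter (fun c => ∀ i, c i ≤ 1 ∧ c i ≤ L i) =
          (Fintype.piFinset (RA L)).filter (fun c => N + ∑ i, c i = b + n) := by
        ext c
        rw [Finset.mem_filter, Finset.mem_filter, mem_RA, Finset.Nat.mem_antidiagonalTuple, and_comm]
        refine and_congr_right fun _ => ?_
        omega
      rw [this]
      refine Finset.sum_congr rfl fun c hc => ?_
      rw [Finset.mem_filter] at hc
      have : b + n - N = ∑ i, c i := by omega
      rw [this]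
    · symm
      refine Finset.sum_eq_zero fun c _ => ?_
      rw [if_neg]; omega
  simp only [h1]
  rw [Finset.sum_comm]
  refine Finset.sum_congr rfl fun c hc => ?_
  rw [mem_RA] at hc
  have hcn : ∑ i, c i ≤ n := by
    calc ∑ i, c i ≤ ∑ i : Fin n, 1 := Finset.sum_le_sum fun i _ => (hc i).1
      _ = n := by simp
  rw [coeff_C_mul, coeff_X_pow_mul']
  by_cases h : n - ∑ i, c i ≤ N
  · rw [if_pos h, Finset.sum_eq_single (N - (n - ∑ i, c i))]
    · rw [if_pos (by omega)]
    · intro b _ hb; rw [if_neg (by omega)]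
    · intro hb; exact absurd (Finset.mem_range.2 (by omega)) hb
  · rw [if_neg h, mul_zero]
    refine Finset.sum_eq_zero fun b _ => ?_
    rw [if_neg (by omega)]

theorem exists_enum (S : Finset ℕ) (n : ℕ) (h : S.card = n) :
    ∃ s : Fin n → ℕ, StrictAnti s ∧ Finset.univ.image s = S := by
  refine ⟨fun i => S.orderEmbOfFin h i.rev, ?_, ?_⟩
  · intro i j hij
    exact (S.orderEmbOfFin h).strictMono (Fin.rev_lt_rev.2 hij)
  · apply Finset.coe_injective
    rw [Finset.coe_image, Finset.coe_univ, Set.image_univ, ← Finset.range_orderEmbOfFin S h]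
    exact Fin.revPerm.surjective.range_comp _

theorem main_nat (r : ℕ) (m : Fin r → ℕ) (L : Fin (r + 1) → ℕ) (hL : StrictAnti L)
    (h0 : L (Fin.last r) = 0) (hm : ∀ i, L (Fin.castSucc i) = m i + 1) (N : ℕ) :
    Prec ℕ (if 1 ≤ N then wedgeMon ℕ ((N - 1) :: List.ofFn m) else 0)
      (∑ b ∈ Finset.range (N + 1), if N ≤ b + (r + 1) then
        sigPlus ℕ b (sbarMinus ℕ (b + (r + 1) - N) (wedgeMon ℕ (List.ofFn L))) else 0) := by
  have hn : 0 < r + 1 := by omega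
  apply prec_crit
  · split_ifs
    · exact none_wedgeMon _ (by simp)
    · rfl
  · rw [Finsupp.finsetSum_apply]
    refine Finset.sum_eq_zero fun b _ => ?_
    split_ifs
    · exact none_sigPlus _ _ (none_sbarMinus _ _ (none_wedgeMon _ (ofFn_ne_nil hn L)))
    · rfl
  · intro s
    split_ifs
    · obtain ⟨ε, -, e⟩ := wedgeMon_form ℕ ((N - 1) :: List.ofFn m)
      rw [e]
      split_ifs
      · rw [bElem_ne ℕ ε _ (by simp)]
        cases ε <;> simp
      · simp
    · simp
  · rintro ⟨S, hS⟩
    rw [← D_ne S hS, ← D_ne S hS, map_sum]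
    simp only [apply_ite (D S), map_zero, D_expand S hS (r + 1) _ _ hn L hL]
    by_cases hc : S.card = r + 1
    · obtain ⟨s, hs, rfl⟩ := exists_enum S (r + 1) hc
      have e1 : (wedgeMon ℕ ((N - 1) :: List.ofFn m)) = wedgeMon ℕ (List.ofFn (Fin.cons (N - 1) m : Fin (r + 1) → ℕ)) := by
        rw [List.ofFn_succ]; simp
      rw [e1, D_wedgeMon_det _ _ _ hs, ← coeff_rowM L m s h0 hm N, ← sum_match]
      refine Finset.sum_congr rfl fun b _ => ?_
      congr 2
      refine Finset.sum_congr rfl fun c _ => ?_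
      split_ifs with hcc
      · exact D_sigPlus _ b hn _ s (anti_sub L c hL hcc) hs
      · rfl
    · rw [D_wedgeMon_card S _ (by simpa using Ne.symm hc)]
      simp only [ite_self]
      refine Finset.sum_eq_zero fun b _ => ?_
      rw [Finset.sum_eq_zero]
      · simp
      · intro c _
        split_ifs with hcc
        · exact D_sigPlus_card S _ b hn _ (anti_sub L c hL hcc) hc
        · rfl

theorem sigPlus_xg (a : ℕ) : sigPlus ℕ a (xg ℕ 0) = xg ℕ a := by
  have h : ∀ i, wedgeMon ℕ [i] = xg ℕ i := fun i => xg_wedge_one ℕ i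
  rw [← h 0]
  unfold sigPlus
  have e : [0] = List.ofFn (fun _ : Fin 1 => 0) := by simp
  rw [ext1_hsOn_sorted ℕ _ a [0] (by simp) (by simp), e, sigPlusL_ofFn, Finset.Nat.antidiagonalTuple_one]
  simp [h]

end ExtSemi

namespace ExtSemi

/-- For every `r ≥ 1` and every partition `λ` with at most `r`
parts: `(σ₊(z)x^0) ∧ [x]^r_λ ⪯ z^r · σ₊(z)(σ̄₋(z)(x^{r+λ_1} ∧ ⋯ ∧ x^{1+λ_r} ∧ x^0))`,
coefficientwise in the powers `z^a` (`a ∈ ℤ`).  The coefficient of `z^a` of the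
left side is `σ_a(x^0) ∧ [x]^r_λ` for `a ≥ 0` (and `0` otherwise); the coefficient
of `z^a` of the right side is the convolution `Σ_{b−d = a−r} σ₊_b ∘ σ̄₋_d`
applied to `x^{r+λ_1} ∧ x^{r−1+λ_2} ∧ ⋯ ∧ x^{1+λ_r} ∧ x^0` (here finitized: terms
with `d > r + 1` vanish since `σ̄₋_d` kills monomials of length `r + 1`). -/
theorem sigma_plus_wedge_surpassed (A : Type*) [CommSemiring A]
    (r : ℕ) (hr : 1 ≤ r) (lam : Fin r → ℕ) (hlam : Antitone lam) (a : ℤ) :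
    Prec A
      (if 0 ≤ a then wedge A (sigPlus A a.toNat (xg A 0)) (xlam A r lam) else 0)
      (∑ b ∈ Finset.range (a + 2).toNat,
        if a ≤ (b : ℤ) + (r : ℤ) then
          sigPlus A b (sbarMinus A (((b : ℤ) - a + (r : ℤ)).toNat)
            (wedgeMon A ((List.ofFn fun i : Fin r => (r - (i : ℕ)) + lam i) ++ [0])))
        else 0) := by
  rcases lt_or_ge a (-1) with ha | ha
  · have h1 : (a + 2).toNat = 0 := by omega
    rw [if_neg (by omega), h1]
    exact ⟨0, ⟨0, by simp⟩, by simp⟩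
  obtain ⟨N, hN⟩ : ∃ N : ℕ, a = (N : ℤ) - 1 := ⟨(a + 1).toNat, by omega⟩
  have key := T_prec A _ _ (main_nat r (fun i => (r - 1 - (i : ℕ)) + lam i)
    (Fin.snoc (fun i : Fin r => (r - (i : ℕ)) + lam i) 0 : Fin (r + 1) → ℕ) ?_ ?_ ?_ N)
  · convert key using 1
    · by_cases h : 1 ≤ N
      · have h2 : a.toNat = N - 1 := by omega
        rw [if_pos (by omega), if_pos h, wedgeMon_cons, T_wedge, T_wedgeMon, ← sigPlus_xg, T_sigPlus, T_xg, h2]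
        rfl
      · rw [if_neg (by omega), if_neg h, map_zero]
    · have h1 : (a + 2).toNat = N + 1 := by omega
      rw [h1, map_sum]
      refine Finset.sum_congr rfl fun b _ => ?_
      have h3 : (List.ofFn fun i : Fin r => (r - (i : ℕ)) + lam i) ++ [0] =
          List.ofFn (Fin.snoc (fun i : Fin r => (r - (i : ℕ)) + lam i) 0 : Fin (r + 1) → ℕ) := by
        rw [List.ofFn_succ']; simp
      have h4 : ((b : ℤ) - a + (r : ℤ)).toNat = b + (r + 1) - N := by omega
      by_cases hb : N ≤ b + (r + 1)
      · rw [if_pos (by omega), if_pos hb, h3, h4, T_sigPlus, T_sbarMinus, T_wedgeMon]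
      · rw [if_neg (by omega), if_neg hb, map_zero]
  · intro i j hij
    induction j using Fin.lastCases with
    | last =>
      induction i using Fin.lastCases with
      | last => exact absurd hij (lt_irrefl _)
      | cast i =>
        rw [Fin.snoc_last, Fin.snoc_castSucc]; have := i.2; omega
    | cast j =>
      induction i using Fin.lastCases with
      | last => exact absurd hij (not_lt.2 (Fin.le_last _))
      | cast i =>
        rw [Fin.snoc_castSucc, Fin.snoc_castSucc]
        have h1 : i < j := by simpa using hij
        have h2 := hlam h1.le
        have h3 : (i : ℕ) < j := h1
        have := j.2
        omega
  · simp
  · intro i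
    rw [Fin.snoc_castSucc]
    have := i.2
    omega

end ExtSemi
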